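/- Let F be a field with char F ≠ 2 and v ∈ F. Then the 2×2×2 spatial matrix A(v) with slices ([[1,0],[0,1]], [[0,v],[1,0]]) is equivalent to A(v') if and only if v' = vz for some nonzero square z ∈ F. -/

import Mathlib

open Polynomial Matrix

/-- Companion matrix of `x² - ux - v`. -/
def Phi {F : Type*} [Field F] (u v : F) : Matrix (Fin 2) (Fin 2) F := !![0, v; 1, u]

/-- Equivalence of two `2×2×2` spatial matrices given by their slice pairs
`(A₁, A₂)` and `(B₁, B₂)`: there exist invertible `R`, `S`, `T` with
`Rᵀ(t₁₁A₁ + t₂₁A₂)S = B₁` and `Rᵀ(t₁₂A₁ + t₂₂A₂)S = B₂`. -/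
def SpEquiv {F : Type*} [Field F] (A₁ A₂ B₁ B₂ : Matrix (Fin 2) (Fin 2) F) : Prop :=
  ∃ R S T : Matrix (Fin 2) (Fin 2) F, IsUnit R ∧ IsUnit S ∧ IsUnit T ∧
    Rᵀ * (T 0 0 • A₁ + T 1 0 • A₂) * S = B₁ ∧
    Rᵀ * (T 0 1 • A₁ + T 1 1 • A₂) * S = B₂

/-!
The determinant of `x • A₁ + y • A₂` is a binary quadratic form in `x, y`. The action of `R` and
`S` scales this form and `T` substitutes linearly into it, so an equivalence multiplies its
discriminant, Cayley's hyperdeterminant, by a nonzero square. The hyperdeterminant of `A(v)` is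
`4 * v`, and `4` can be cancelled. Conversely, `v` becomes `v * a ^ 2` on multiplying the second
slice by `a` and then conjugating with `diag(1, a)`.
-/

section Hyperdet

variable {K : Type*} [CommRing K]

/-- Cayley's hyperdeterminant of the `2×2×2` spatial matrix with slices `A`, `B`, encoded as the
discriminant of the binary quadratic form `det (x • A + y • B)`. -/
def hyperdet (A B : Matrix (Fin 2) (Fin 2) K) : K :=
  discrim A.det (QuadraticMap.polar det A B) B.det

theorem det_smul_add_smul_fin_two (x y : K) (A B : Matrix (Fin 2) (Fin 2) K) :
    (x • A + y • B).det =
      x ^ 2 * A.det + x * y * QuadraticMap.polar det A B + y ^ 2 * B.det := by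
  simp only [QuadraticMap.polar, det_fin_two, Matrix.add_apply, Matrix.smul_apply,
    smul_eq_mul]
  ring

theorem polar_det_smul_add_smul_fin_two (a b c d : K) (A B : Matrix (Fin 2) (Fin 2) K) :
    QuadraticMap.polar det (a • A + c • B) (b • A + d • B) =
      2 * a * b * A.det + (a * d + b * c) * QuadraticMap.polar det A B + 2 * c * d * B.det := by
  have add_eq : a • A + c • B + (b • A + d • B) = (a + b) • A + (c + d) • B := by module
  rw [QuadraticMap.polar, add_eq]
  simp only [det_smul_add_smul_fin_two]
  ring

theorem polar_det_mul_mul {n : Type*} [Fintype n] [DecidableEq n] (P A B S : Matrix n n K) :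
    QuadraticMap.polar det (P * A * S) (P * B * S) =
      P.det * S.det * QuadraticMap.polar det A B := by
  simp only [QuadraticMap.polar, ← Matrix.mul_add, ← Matrix.add_mul, det_mul]
  ring

theorem hyperdet_mul_mul (P A B S : Matrix (Fin 2) (Fin 2) K) :
    hyperdet (P * A * S) (P * B * S) = (P.det * S.det) ^ 2 * hyperdet A B := by
  simp only [hyperdet, discrim, polar_det_mul_mul, det_mul]
  ring

theorem hyperdet_smul_add_smul (T A B : Matrix (Fin 2) (Fin 2) K) :
    hyperdet (T 0 0 • A + T 1 0 • B) (T 0 1 • A + T 1 1 • B) = T.det ^ 2 * hyperdet A B := by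
  simp only [hyperdet, discrim, polar_det_smul_add_smul_fin_two, det_smul_add_smul_fin_two,
    det_fin_two T]
  ring

theorem hyperdet_one_left (A : Matrix (Fin 2) (Fin 2) K) : hyperdet 1 A = A.discr := by
  have polar_det_one : QuadraticMap.polar det 1 A = A.trace := by
    simp only [QuadraticMap.polar, det_fin_two, trace_fin_two, Matrix.add_apply, one_apply_eq,
      one_apply_ne zero_ne_one, one_apply_ne one_ne_zero]
    ring
  rw [hyperdet, discrim, polar_det_one, det_one, discr_fin_two]
  ring

end Hyperdet

section Equivalence

variable {F : Type*} [Field F]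

theorem SpEquiv.exists_hyperdet_eq_sq_mul {A₁ A₂ B₁ B₂ : Matrix (Fin 2) (Fin 2) F}
    (h : SpEquiv A₁ A₂ B₁ B₂) : ∃ a : F, a ≠ 0 ∧ hyperdet B₁ B₂ = a ^ 2 * hyperdet A₁ A₂ := by
  obtain ⟨R, S, T, hR, hS, hT, rfl, rfl⟩ := h
  rw [isUnit_iff_isUnit_det, isUnit_iff_ne_zero] at hR hS hT
  refine ⟨R.det * S.det * T.det, mul_ne_zero (mul_ne_zero hR hS) hT, ?_⟩
  rw [hyperdet_mul_mul, hyperdet_smul_add_smul, det_transpose]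
  ring

theorem SpEquiv.one_left_of_smul_mul_eq_mul {A B P : Matrix (Fin 2) (Fin 2) F} {c : F}
    (hc : c ≠ 0) (hP : IsUnit P) (h : c • A * P = P * B) : SpEquiv 1 A 1 B := by
  have hP_det : IsUnit P.det := (isUnit_iff_isUnit_det P).mp hP
  refine ⟨P⁻¹ᵀ, P, diagonal ![1, c], ?_, hP, ?_, ?_, ?_⟩
  · exact (isUnit_transpose _).mpr (isUnit_nonsing_inv_iff.mpr hP)
  · simpa [isUnit_iff_isUnit_det] using hc
  · simp [nonsing_inv_mul P hP_det]
  · simpa [Matrix.mul_assoc, nonsing_inv_mul_cancel_left P _ hP_det] using congrArg (P⁻¹ * ·) h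

theorem hyperdet_one_Phi (u v : F) : hyperdet 1 (Phi u v) = u ^ 2 + 4 * v := by
  have trace_Phi : (Phi u v).trace = u := by simp [Phi, trace_fin_two]
  have det_Phi : (Phi u v).det = -v := by simp [Phi, det_fin_two]
  rw [hyperdet_one_left, discr_fin_two, trace_Phi, det_Phi]
  ring

theorem smul_Phi_mul_diagonal (u v a : F) :
    a • Phi u v * diagonal ![1, a] = diagonal ![1, a] * Phi (a * u) (v * a ^ 2) := by
  ext i j
  fin_cases i <;> fin_cases j <;> simp [Phi] <;> ring

theorem spEquiv_one_Phi_mul_sq (u v : F) {a : F} (ha : a ≠ 0) :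
    SpEquiv 1 (Phi u v) 1 (Phi (a * u) (v * a ^ 2)) := by
  have diagonal_isUnit : IsUnit (diagonal ![1, a]) := by simpa [isUnit_iff_isUnit_det] using ha
  exact .one_left_of_smul_mul_eq_mul ha diagonal_isUnit (smul_Phi_mul_diagonal u v a)

end Equivalence

/-- For ,  is equivalent to  iff  for some
nonzero square . -/
theorem Av_equiv_iff {F : Type*} [Field F] (hF : ringChar F ≠ 2) (v v' : F) :
    SpEquiv (1 : Matrix (Fin 2) (Fin 2) F) (Phi 0 v) 1 (Phi 0 v') ↔
      ∃ z : F, z ≠ 0 ∧ (∃ a : F, z = a ^ 2) ∧ v' = v * z := by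
  have four_ne_zero' : (4 : F) ≠ 0 := by
    rw [show (4 : F) = 2 ^ 2 by norm_num]
    exact pow_ne_zero 2 (Ring.two_ne_zero hF)
  constructor
  · intro h
    obtain ⟨a, ha, hyperdet_eq⟩ := h.exists_hyperdet_eq_sq_mul
    rw [hyperdet_one_Phi, hyperdet_one_Phi] at hyperdet_eq
    refine ⟨a ^ 2, pow_ne_zero 2 ha, ⟨a, rfl⟩, mul_left_cancel₀ four_ne_zero' ?_⟩
    linear_combination hyperdet_eq
  · rintro ⟨_, hz, ⟨a, rfl⟩, rfl⟩
    simpa using spEquiv_one_Phi_mul_sq 0 v (pow_ne_zero_iff two_ne_zero |>.mp hz)
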